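/- For every level-2 collapsible pushdown system S=(Q,Σ,Γ,Δ,q₀) there is a deterministic finite automaton with output over the input alphabet Σ ∪ (Σ×{2}×{0}) with at most 2^{|Q|²} states which, reading the word w↓₀ for any word w that occurs as the topmost word of some stack in Stacks(Σ), outputs the set ExRet(w). -/

import Mathlib

namespace CPG

/-! ## Level-2 collapsible pushdown stacks -/

/-- Stack letters: `Sum.inl σ` is a letter with a level-1 link,
`Sum.inr (σ, k)` is a letter with a level-2 link to the substack of width `k`. -/
abbrev Letter (A : Type) := A ⊕ (A × ℕ)

def symOf {A : Type} : Letter A → A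
  | Sum.inl a => a
  | Sum.inr (a, _) => a

def lvlOf {A : Type} : Letter A → ℕ
  | Sum.inl _ => 1
  | Sum.inr _ => 2

abbrev Word (A : Type) := List (Letter A)

/-- A 2-word: a list of words; the last word is the topmost one. -/
abbrev Stack2 (A : Type) := List (Word A)

/-- The initial level-2 stack `⊥₂`. -/
def bottom2 {A : Type} (bot : A) : Stack2 A := [[Sum.inl bot]]

def top2 {A : Type} (s : Stack2 A) : Option (Word A) := s.getLast?

def top1 {A : Type} (s : Stack2 A) : Option (Letter A) := s.getLast?.bind List.getLast?

def symS {A : Type} (s : Stack2 A) : Option A := (top1 s).map symOf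

def lvlS {A : Type} (s : Stack2 A) : Option ℕ := (top1 s).map lvlOf

def lnkS {A : Type} (s : Stack2 A) : Option ℕ :=
  match top1 s, top2 s with
  | some (Sum.inr (_, j)), _ => some j
  | some (Sum.inl _), some w => some (w.length - 1)
  | _, _ => none

def clone2 {A : Type} (s : Stack2 A) : Option (Stack2 A) :=
  (top2 s).map fun w => s ++ [w]

def push1 {A : Type} [DecidableEq A] (bot a : A) (s : Stack2 A) : Option (Stack2 A) :=
  if a = bot then none else (top2 s).map fun w => s.dropLast ++ [w ++ [Sum.inl a]]

def push2 {A : Type} [DecidableEq A] (bot a : A) (s : Stack2 A) : Option (Stack2 A) :=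
  if a = bot then none else
    (top2 s).map fun w => s.dropLast ++ [w ++ [Sum.inr (a, s.length - 1)]]

def pop2 {A : Type} (s : Stack2 A) : Option (Stack2 A) :=
  if 1 < s.length then some s.dropLast else none

def pop1 {A : Type} (s : Stack2 A) : Option (Stack2 A) :=
  match s.getLast? with
  | some w => if 1 < w.length then some (s.dropLast ++ [w.dropLast]) else none
  | none => none

def collapse {A : Type} (s : Stack2 A) : Option (Stack2 A) :=
  match top1 s with
  | some (Sum.inr (_, k)) => if 0 < k then some (s.take k) else none
  | some (Sum.inl _) => pop1 s
  | none => none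

/-- The level-2 stack operations. -/
inductive Op (A : Type) where
  | clone2 | pop1 | pop2 | collapse
  | push1 (a : A) | push2 (a : A)

def applyOp {A : Type} [DecidableEq A] (bot : A) : Op A → Stack2 A → Option (Stack2 A)
  | .clone2 => clone2
  | .pop1 => pop1
  | .pop2 => pop2
  | .collapse => collapse
  | .push1 a => push1 bot a
  | .push2 a => push2 bot a

/-- `Stacks(Σ)` : the smallest set containing `⊥₂` and closed under the operations. -/
inductive IsStack {A : Type} [DecidableEq A] (bot : A) : Stack2 A → Prop where
  | base : IsStack bot (bottom2 bot)
  | step {s t : Stack2 A} (op : Op A) : IsStack bot s → applyOp bot op s = some t →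
      IsStack bot t

/-- Iterated application of a partial stack operation. -/
def iter {A : Type} (f : Stack2 A → Option (Stack2 A)) : ℕ → Stack2 A → Option (Stack2 A)
  | 0, s => some s
  | n + 1, s => (f s).bind (iter f n)

/-- `t` is a substack of `s`: `t = Pop₁ⁿ(Pop₂ᵐ(s))`. -/
def Substack {A : Type} (t s : Stack2 A) : Prop :=
  ∃ n m, (iter pop2 m s).bind (iter pop1 n) = some t

def ProperSubstack {A : Type} (t s : Stack2 A) : Prop := Substack t s ∧ t ≠ s

/-- `s` is a prefix of `t` (`s ⊑ t`). -/
def StackPrefix {A : Type} (s t : Stack2 A) : Prop :=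
  s ≠ [] ∧ s.length ≤ t.length ∧ s.dropLast <+: t ∧
    ∀ j, s.length - 1 ≤ j → j < t.length → s.getLastD [] <+: t.getD j []

/-- `t[s/u]` : the stack obtained from `t` by replacing the prefix `s` by `u`. -/
def substPrefix {A : Type} (t s u : Stack2 A) : Stack2 A :=
  u.dropLast ++
    (t.drop (s.length - 1)).map fun v => u.getLastD [] ++ v.drop (s.getLastD []).length

/-! ## Collapsible pushdown systems and runs -/

/-- A level-2 collapsible pushdown system. -/
structure CPS (Q A Γ : Type) where
  bot : A
  q0 : Q
  Δ : Set (Q × A × Γ × Q × Op A)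

variable {Q A Γ : Type} [DecidableEq A]

/-- A `γ`-labelled transition realized by the operation `op`. -/
def TransOp (S : CPS Q A Γ) (γ : Γ) (op : Op A) (c c' : Q × Stack2 A) : Prop :=
  ∃ σ : A, symS c.2 = some σ ∧ (c.1, σ, γ, c'.1, op) ∈ S.Δ ∧
    applyOp S.bot op c.2 = some c'.2

def Trans (S : CPS Q A Γ) (γ : Γ) (c c' : Q × Stack2 A) : Prop :=
  ∃ op, TransOp S γ op c c'

/-- A run of a collapsible pushdown system (recording configurations, labels and
operations of each step). -/
structure Run (S : CPS Q A Γ) where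
  len : ℕ
  cfg : ℕ → Q × Stack2 A
  lab : ℕ → Γ
  op : ℕ → Op A
  ok : ∀ i, i < len → TransOp S (lab i) (op i) (cfg i) (cfg (i + 1))

def Run.stk {S : CPS Q A Γ} (ρ : Run S) (i : ℕ) : Stack2 A := (ρ.cfg i).2

/-- The word of labels along a run. -/
def Run.labels {S : CPS Q A Γ} (ρ : Run S) : List Γ :=
  List.ofFn fun i : Fin ρ.len => ρ.lab i

/-- `Reach_L`-reachability: a run from `c` to `c'` labelled by a word in `L`. -/
def ReachL (S : CPS Q A Γ) (L : Language Γ) (c c' : Q × Stack2 A) : Prop :=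
  ∃ ρ : Run S, ρ.cfg 0 = c ∧ ρ.cfg ρ.len = c' ∧ ρ.labels ∈ L

/-- Plain reachability. -/
def Reach (S : CPS Q A Γ) (c c' : Q × Stack2 A) : Prop :=
  ∃ ρ : Run S, ρ.cfg 0 = c ∧ ρ.cfg ρ.len = c'

/-! ## ε-contraction -/

def oneLetterLang (γ : Γ) : Language Γ := {[γ]}

def nonEpsLang (eps : Γ) : Language Γ := {w | ∃ γ : Γ, γ ≠ eps ∧ w = [γ]}

/-- The language `{ε}*`. -/
def epsStar (eps : Γ) : Language Γ := KStar.kstar (oneLetterLang eps)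

/-- The language `({ε}*(Γ∖{ε}))*`. -/
def domLang (eps : Γ) : Language Γ :=
  KStar.kstar (epsStar eps * nonEpsLang eps)

/-- The language `{ε}*γ`. -/
def edgeLang (eps γ : Γ) : Language Γ := epsStar eps * oneLetterLang γ

/-- The vertex set of the ε-contraction `G/ε`. -/
def EpsDomain (S : CPS Q A Γ) (eps : Γ) : Set (Q × Stack2 A) :=
  {c | ReachL S (domLang eps) (S.q0, bottom2 S.bot) c}

/-! ## (Generalised) milestones and the order ≪ -/

/-- `wordAt bot s i` is the word `wᵢ` of `s`, with the convention `w₀ = ⊥`. -/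
def wordAt {A : Type} (bot : A) (s : Stack2 A) (i : ℕ) : Word A :=
  if i = 0 then [Sum.inl bot] else s.getD (i - 1) []

/-- Longest common prefix of two words. -/
def lcp {α : Type} [DecidableEq α] : List α → List α → List α
  | a :: s, b :: t => if a = b then a :: lcp s t else []
  | _, _ => []

/-- `m` is a generalised milestone of `s`. -/
def GenMilestone (bot : A) (s m : Stack2 A) : Prop :=
  ∃ i v, i < s.length ∧ m = s.take i ++ [v] ∧
    lcp (wordAt bot s i) (wordAt bot s (i + 1)) <+: v ∧
    (v <+: wordAt bot s i ∨ v <+: wordAt bot s (i + 1))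

/-- `m` is a milestone of `s`. -/
def Milestone (bot : A) (s m : Stack2 A) : Prop :=
  ∃ i v, i < s.length ∧ m = s.take i ++ [v] ∧
    lcp (wordAt bot s i) (wordAt bot s (i + 1)) <+: v ∧
    v <+: wordAt bot s (i + 1)

def genMilestones (bot : A) (s : Stack2 A) : Set (Stack2 A) := {m | GenMilestone bot s m}

def milestones (bot : A) (s : Stack2 A) : Set (Stack2 A) := {m | Milestone bot s m}

/-- The base cases of the partial order `≪`. -/
def llBase (bot : A) (s t : Stack2 A) : Prop :=
  s.length < t.length ∨
    (s ≠ [] ∧ s.length = t.length ∧ s.dropLast = t.dropLast ∧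
      ((t.getLastD [] <+: s.getLastD [] ∧ t.getLastD [] ≠ s.getLastD [] ∧
          s.getLastD [] <+: wordAt bot s (s.length - 1)) ∨
        (s.getLastD [] <+: t.getLastD [] ∧ s.getLastD [] ≠ t.getLastD [] ∧
          ¬ t.getLastD [] <+: wordAt bot s (s.length - 1))))

/-- The order `≪`: the smallest reflexive transitive relation containing `llBase`. -/
def ll (bot : A) : Stack2 A → Stack2 A → Prop := Relation.ReflTransGen (llBase bot)

/-- `m'` is the ≪-successor of `m` within `genMilestones bot s`. -/
def LlSuccessor (bot : A) (s m m' : Stack2 A) : Prop :=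
  GenMilestone bot s m ∧ GenMilestone bot s m' ∧ m ≠ m' ∧ ll bot m m' ∧
    ∀ m'', GenMilestone bot s m'' → ll bot m m'' → m'' ≠ m → ll bot m' m''

/-! ## Loops, returns and 1-loops -/

/-- The segment `[i,j]` of `ρ` is a loop (of its initial stack). -/
def LoopSeg {S : CPS Q A Γ} (ρ : Run S) (i j : ℕ) : Prop :=
  i ≤ j ∧ j ≤ ρ.len ∧ ρ.stk j = ρ.stk i ∧
    (∀ k, i ≤ k → k ≤ j → ∀ t, pop2 (ρ.stk i) = some t → ¬ Substack (ρ.stk k) t) ∧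
    (∀ k, i ≤ k → k ≤ j → ∀ m, 0 < m → ∀ t, iter pop1 m (ρ.stk i) = some t →
      ρ.stk k = t → ∀ m', m' < m → ∃ t', iter pop1 m' (ρ.stk i) = some t' ∧
        lvlS t' = some 1)

/-- A high loop: a loop that never visits `Pop₁` of its stack. -/
def HighLoopSeg {S : CPS Q A Γ} (ρ : Run S) (i j : ℕ) : Prop :=
  LoopSeg ρ i j ∧ ∀ k, i ≤ k → k ≤ j → ∀ t, pop1 (ρ.stk i) = some t → ρ.stk k ≠ t

/-- A low loop: a loop whose second and second-to-last stacks are `Pop₁` of its stack. -/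
def LowLoopSeg {S : CPS Q A Γ} (ρ : Run S) (i j : ℕ) : Prop :=
  LoopSeg ρ i j ∧ i < j ∧
    ∃ t, pop1 (ρ.stk i) = some t ∧ ρ.stk (i + 1) = t ∧ ρ.stk (j - 1) = t

/-- The common part of the definition of a return on the segment `[i,j]`:
it leads from its initial stack `t` to `Pop₂(t)` and never visits a substack
of `Pop₂(t)` before its final configuration. -/
def RetShell {S : CPS Q A Γ} (ρ : Run S) (i j : ℕ) : Prop :=
  i < j ∧ j ≤ ρ.len ∧ pop2 (ρ.stk i) = some (ρ.stk j) ∧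
    ∀ k, i ≤ k → k < j → ¬ Substack (ρ.stk k) (ρ.stk j)

/-- The segment `[i,j]` of `ρ` is a return (from its initial stack `t` to `Pop₂(t)`). -/
inductive RetSeg {S : CPS Q A Γ} (ρ : Run S) : ℕ → ℕ → Prop where
  | pop2 {i j : ℕ} (h : RetShell ρ i j) (hop : ρ.op (j - 1) = Op.pop2) : RetSeg ρ i j
  | collapse {i j : ℕ} (h : RetShell ρ i j) (hop : ρ.op (j - 1) = Op.collapse)
      (hpre : ∃ w w', top2 (ρ.stk i) = some w ∧ top2 (ρ.stk (j - 1)) = some w' ∧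
        w <+: w' ∧ w ≠ w') : RetSeg ρ i j
  | sub {i k j : ℕ} (h : RetShell ρ i j) (hik : i < k) (hkj : k ≤ j)
      (hpop : pop1 (ρ.stk i) = some (ρ.stk k)) (hret : RetSeg ρ k j) : RetSeg ρ i j

/-- The segment `[i,j]` of `ρ` is a level-1-loop. -/
def OneLoopSeg {S : CPS Q A Γ} (ρ : Run S) (i j : ℕ) : Prop :=
  i ≤ j ∧ j ≤ ρ.len ∧
    ∃ (s : Stack2 A) (w : Word A) (s' : Stack2 A),
      ρ.stk i = s ++ [w] ∧ ρ.stk j = s ++ s' ++ [w] ∧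
      (∀ k, i ≤ k → k ≤ j → s.length < (ρ.stk k).length) ∧
      (∀ k, i ≤ k → k ≤ j → 1 < w.length → top2 (ρ.stk k) = some w.dropLast →
        ∃ m, k < m ∧ m ≤ j ∧ RetSeg ρ k m)

/-! ## ExRet, ExLoop, ... -/

/-- `w↓₀` : replace every level-2 link by `0`. -/
def down0 {A : Type} : Word A → Word A :=
  List.map fun a => match a with
    | Sum.inl x => Sum.inl x
    | Sum.inr (x, _) => Sum.inr (x, 0)

def ExRet (S : CPS Q A Γ) (w : Word A) : Set (Q × Q) :=
  {p | ∃ ρ : Run S, ρ.cfg 0 = (p.1, [down0 w, down0 w]) ∧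
    ρ.cfg ρ.len = (p.2, [down0 w]) ∧ RetSeg ρ 0 ρ.len}

def ExLoop (S : CPS Q A Γ) (w : Word A) : Set (Q × Q) :=
  {p | ∃ ρ : Run S, ρ.cfg 0 = (p.1, [down0 w]) ∧ ρ.cfg ρ.len = (p.2, [down0 w]) ∧
    LoopSeg ρ 0 ρ.len}

def ExHLoop (S : CPS Q A Γ) (w : Word A) : Set (Q × Q) :=
  {p | ∃ ρ : Run S, ρ.cfg 0 = (p.1, [down0 w]) ∧ ρ.cfg ρ.len = (p.2, [down0 w]) ∧
    HighLoopSeg ρ 0 ρ.len}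

def ExLLoop (S : CPS Q A Γ) (w : Word A) : Set (Q × Q) :=
  {p | ∃ ρ : Run S, ρ.cfg 0 = (p.1, [down0 w]) ∧ ρ.cfg ρ.len = (p.2, [down0 w]) ∧
    LowLoopSeg ρ 0 ρ.len}

def ExOneLoop (S : CPS Q A Γ) (w : Word A) : Set (Q × Q) :=
  {p | ∃ (ρ : Run S) (s' : Stack2 A), ρ.cfg 0 = (p.1, [down0 w]) ∧
    ρ.cfg ρ.len = (p.2, s' ++ [down0 w]) ∧ OneLoopSeg ρ 0 ρ.len}

/-! ## Finite binary trees -/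

/-- Finite binary trees with labels in `α` and optional left/right children. -/
inductive PTree (α : Type) where
  | node (a : α) (l r : Option (PTree α)) : PTree α

/-- The label of the node at address `d` (`false` = left/0, `true` = right/1). -/
def PTree.labelAt {α : Type} : PTree α → List Bool → Option α
  | .node a _ _, [] => some a
  | .node _ (some t) _, false :: d => t.labelAt d
  | .node _ none _, false :: _ => none
  | .node _ _ (some t), true :: d => t.labelAt d
  | .node _ _ none, true :: _ => none

def PTree.map {α β : Type} (f : α → β) : PTree α → PTree β
  | .node a l r =>
    .node (f a)
      (match l with | none => none | some t => some (t.map f))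
      (match r with | none => none | some t => some (t.map f))

/-- Convolution of two trees, with `none` as padding symbol `□`. -/
def PTree.conv {α β : Type} : PTree α → PTree β → PTree (Option α × Option β)
  | .node a l r, .node b l' r' =>
    .node (some a, some b)
      (match l, l' with
        | none, none => none
        | some t, none => some (t.map fun x => (some x, none))
        | none, some u => some (u.map fun x => (none, some x))
        | some t, some u => some (PTree.conv t u))
      (match r, r' with
        | none, none => none
        | some t, none => some (t.map fun x => (some x, none))
        | none, some u => some (u.map fun x => (none, some x))
        | some t, some u => some (PTree.conv t u))

/-- A (bottom-up nondeterministic) finite tree automaton. -/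
structure TreeAut (α : Type) where
  St : Type
  fin : Finite St
  qI : St
  F : Set St
  Δ : Set (St × α × St × St)

/-- Acceptance of a finite tree by a tree automaton. -/
def TreeAut.Accepts {α : Type} (M : TreeAut α) (t : PTree α) : Prop :=
  ∃ ρ : List Bool → M.St,
    (∀ d, t.labelAt d = none → ρ d = M.qI) ∧
    (∀ d a, t.labelAt d = some a → (ρ d, a, ρ (d ++ [false]), ρ (d ++ [true])) ∈ M.Δ) ∧
    ρ [] ∈ M.F

/-- A family of binary relations on `B` is tree-automatic. -/
def IsTreeAutomatic {B : Type} {I : Type} (E : I → B → B → Prop) : Prop :=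
  ∃ (α : Type) (_ : Finite α) (AB : TreeAut α) (AE : I → TreeAut (Option α × Option α))
    (f : {t : PTree α // AB.Accepts t} → B),
    Function.Bijective f ∧
      ∀ (i : I) (t₁ t₂ : {t : PTree α // AB.Accepts t}),
        (AE i).Accepts (PTree.conv t₁.1 t₂.1) ↔ E i (f t₁) (f t₂)

/-! ## The encoding of configurations as trees -/

/-- Labels of encoding trees: a state, a pair (symbol, link level), or `ε`. -/
abbrev EncLabel (Q A : Type) := Q ⊕ ((A × ℕ) ⊕ Unit)

def epsLab {Q A : Type} : EncLabel Q A := Sum.inr (Sum.inr ())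

def symLab {Q A : Type} (τ : Letter A) : EncLabel Q A := Sum.inr (Sum.inl (symOf τ, lvlOf τ))

/-- Encoding of blocklines as trees (with a fuel parameter driving the recursion;
the fuel used in `encStack` is large enough so that it never runs out on actual
blocklines). The left subtree encodes the blockline induced by the first maximal
block, the right subtree the remaining blocks. -/
def encBL (Q : Type) {A : Type} [DecidableEq A] :
    ℕ → EncLabel Q A → List (Word A) → PTree (EncLabel Q A)
  | 0, σ, _ => .node σ none none
  | _ + 1, σ, [] => .node σ none none
  | fuel + 1, σ, w :: rest =>
    if w.length ≤ 1 then
      match rest with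
      | [] => .node σ none none
      | _ :: _ => .node σ none (some (encBL Q fuel epsLab rest))
    else
      let p : Word A → Bool := fun v => decide (v.take 2 = w.take 2)
      let blk := (w :: rest).takeWhile p
      let restBlk := (w :: rest).dropWhile p
      .node σ
        (some (encBL Q fuel
          (match w[1]? with | some τ' => symLab τ' | none => epsLab)
          (blk.map List.tail)))
        (match restBlk with
          | [] => none
          | _ :: _ => some (encBL Q fuel epsLab restBlk))

/-- The total number of letters of a 2-word. -/
def size2 {A : Type} (s : Stack2 A) : ℕ := (s.map List.length).sum

/-- The encoding `Enc(s) = Enc(s, (⊥,1))` of a stack. -/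
def encStack (Q : Type) {A : Type} [DecidableEq A] (bot : A) (s : Stack2 A) :
    PTree (EncLabel Q A) :=
  encBL Q (size2 s + 1) (Sum.inr (Sum.inl (bot, 1))) s

/-- The encoding of a configuration: the state at the root, `Enc(s)` as left subtree. -/
def Enc {Q A : Type} [DecidableEq A] (bot : A) (c : Q × Stack2 A) : PTree (EncLabel Q A) :=
  .node (Sum.inl c.1) (some (encStack Q bot c.2)) none

/-- The class `EncTrees` of encoding trees. -/
def EncTrees (Q A : Type) (bot : A) : Set (PTree (EncLabel Q A)) :=
  {T | (∃ q : Q, T.labelAt [] = some (Sum.inl q)) ∧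
    T.labelAt [true] = none ∧ T.labelAt [false] ≠ none ∧
    T.labelAt [false] = some (Sum.inr (Sum.inl (bot, 1))) ∧
    (∀ (d : List Bool) (x : EncLabel Q A),
      T.labelAt (false :: (d ++ [false])) = some x →
        ∃ (σ : A) (l : ℕ), σ ≠ bot ∧ (l = 1 ∨ l = 2) ∧ x = Sum.inr (Sum.inl (σ, l))) ∧
    (∀ (d : List Bool) (x : EncLabel Q A), T.labelAt (d ++ [true]) = some x → x = epsLab) ∧
    (∀ (d : List Bool) (σ : A), ¬ (T.labelAt (d ++ [false]) = some (Sum.inr (Sum.inl (σ, 1))) ∧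
      T.labelAt (d ++ [true, false]) = some (Sum.inr (Sum.inl (σ, 1)))))}

/-- Restriction of a tree to the nodes lexicographically ≤ `d`. -/
def restrictLex {α : Type} : PTree α → List Bool → PTree α
  | .node a _ _, [] => .node a none none
  | .node a l _, false :: d =>
      .node a (match l with | none => none | some t => some (restrictLex t d)) none
  | .node a l r, true :: d =>
      .node a l (match r with | none => none | some t => some (restrictLex t d))

/-- The lexicographic order on tree addresses. -/
def lexLe (d e : List Bool) : Prop :=
  d <+: e ∨ ∃ (c x y : List Bool), d = c ++ false :: x ∧ e = c ++ true :: y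

/-! ## Deterministic finite automata with output (Moore machines) -/

structure Moore (α ω : Type) where
  St : Type
  fin : Finite St
  init : St
  step : St → α → St
  out : St → ω

def Moore.output {α ω : Type} (M : Moore α ω) (w : List α) : ω :=
  M.out (w.foldl M.step M.init)

set_option linter.unusedSectionVars false



/-- Non-computational description of one stack operation on `B ++ [w0 ++ [l]]`. -/
inductive St {A : Type} (bot : A) :
    Op A → Stack2 A → Word A → Letter A → Stack2 A → Prop where
  | clone (B w0 l) : St bot .clone2 B w0 l (B ++ [w0 ++ [l]] ++ [w0 ++ [l]])
  | push1 (B w0 l a) : a ≠ bot → St bot (.push1 a) B w0 l (B ++ [w0 ++ [l] ++ [Sum.inl a]])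
  | push2 (B w0 l a) : a ≠ bot →
      St bot (.push2 a) B w0 l (B ++ [w0 ++ [l] ++ [Sum.inr (a, B.length)]])
  | pop1 (B w0 l) : w0 ≠ [] → St bot .pop1 B w0 l (B ++ [w0])
  | pop2 (B w0 l) : B ≠ [] → St bot .pop2 B w0 l B
  | coll1 (B w0 a) : w0 ≠ [] → St bot .collapse B w0 (Sum.inl a) (B ++ [w0])
  | coll2 (B w0 a k) : 0 < k →
      St bot .collapse B w0 (Sum.inr (a, k)) ((B ++ [w0 ++ [Sum.inr (a, k)]]).take k)

theorem applyOp_iff {A : Type} [DecidableEq A] (bot : A) (op : Op A) (B : Stack2 A)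
    (w0 : Word A) (l : Letter A) (s' : Stack2 A) :
    applyOp bot op (B ++ [w0 ++ [l]]) = some s' ↔ St bot op B w0 l s' := by
  constructor
  · intro h
    cases op with
    | clone2 =>
      simp only [applyOp, clone2, top2, List.getLast?_append, List.getLast?_singleton,
        Option.some_or, Option.map_some, Option.some.injEq] at h
      subst h; exact .clone _ _ _
    | pop1 =>
      simp only [applyOp, pop1, List.getLast?_append, List.getLast?_singleton,
        Option.some_or] at h
      split at h
      · rename_i hl
        simp at h hl
        subst h
        exact .pop1 _ _ _ (by rintro rfl; simp at hl)
      · simp at h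
    | pop2 =>
      simp only [applyOp, pop2] at h
      split at h
      · rename_i hl
        simp at h hl
        subst h
        exact .pop2 _ _ _ (by rintro rfl; simp at hl)
      · simp at h
    | push1 a =>
      simp only [applyOp, push1, top2, List.getLast?_append, List.getLast?_singleton,
        Option.some_or, Option.map_some, List.dropLast_concat] at h
      split at h
      · simp at h
      · simp only [Option.some.injEq] at h
        subst h
        exact .push1 _ _ _ _ (by assumption)
    | push2 a =>
      simp only [applyOp, push2, top2, List.getLast?_append, List.getLast?_singleton,
        Option.some_or, Option.map_some, List.dropLast_concat, List.length_append,
        List.length_singleton, Nat.add_sub_cancel] at h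
      split at h
      · simp at h
      · simp only [Option.some.injEq] at h
        subst h
        exact .push2 _ _ _ _ (by assumption)
    | collapse =>
      rcases l with a | ⟨a, k⟩
      · simp only [applyOp, collapse, top1, pop1, List.getLast?_append, List.getLast?_singleton,
          Option.some_or, Option.bind_some] at h
        split at h
        · rename_i hl
          simp at h hl
          subst h
          exact .coll1 _ _ _ (by rintro rfl; simp at hl)
        · simp at h
      · simp only [applyOp, collapse, top1, List.getLast?_append, List.getLast?_singleton,
          Option.some_or, Option.bind_some] at h
        split at h
        · simp only [Option.some.injEq] at h
          subst h
          exact .coll2 _ _ _ _ (by assumption)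
        · simp at h
  · intro h
    cases h with
    | clone => simp [applyOp, clone2, top2]
    | push1 _ _ _ a h => simp [applyOp, push1, top2, h]
    | push2 _ _ _ a h => simp [applyOp, push2, top2, h]
    | pop1 _ _ _ h => simp [applyOp, pop1, List.length_pos_iff, h]
    | pop2 _ _ _ h => simp [applyOp, pop2, List.length_pos_iff, h]
    | coll1 _ _ a h => simp [applyOp, collapse, top1, pop1, List.length_pos_iff, h]
    | coll2 _ _ a k h => simp [applyOp, collapse, top1, h]


theorem transOp_of {S : CPS Q A Γ} {γ : Γ} {op : Op A} {q q' : Q} {B : Stack2 A} {w0 : Word A}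
    {l : Letter A} {s' : Stack2 A} (hd : (q, symOf l, γ, q', op) ∈ S.Δ)
    (h : St S.bot op B w0 l s') : TransOp S γ op (q, B ++ [w0 ++ [l]]) (q', s') :=
  ⟨symOf l, by simp [symS, top1], hd, (applyOp_iff _ _ _ _ _ _).2 h⟩

theorem transOp_cases {S : CPS Q A Γ} {γ : Γ} {op : Op A} {q q' : Q} {s s' : Stack2 A}
    (h : TransOp S γ op (q, s) (q', s')) :
    ∃ B w0 l, s = B ++ [w0 ++ [l]] ∧ (q, symOf l, γ, q', op) ∈ S.Δ ∧
      St S.bot op B w0 l s' := by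
  obtain ⟨σ, h1, h2, h3⟩ := h
  rcases List.eq_nil_or_concat s with rfl | ⟨B, w, rfl⟩
  · simp [symS, top1] at h1
  rcases List.eq_nil_or_concat w with rfl | ⟨w0, l, rfl⟩
  · simp [symS, top1] at h1
  simp [symS, top1] at h1
  subst h1
  simp only [List.concat_eq_append] at h3 ⊢
  exact ⟨B, w0, l, rfl, h2, (applyOp_iff _ _ _ _ _ _).1 h3⟩

/-- `Hit S N k c c'`: a `k`-step run from `c` whose first configuration of width `≤ N` is `c'`. -/
inductive Hit (S : CPS Q A Γ) (N : ℕ) : ℕ → Q × Stack2 A → Q × Stack2 A → Prop where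
  | done (c) : c.2.length ≤ N → Hit S N 0 c c
  | step {k c c1 c'} (γ op) : N < c.2.length → TransOp S γ op c c1 → Hit S N k c1 c' →
      Hit S N (k + 1) c c'

theorem Hit.eq_of_le {S : CPS Q A Γ} {N k : ℕ} {c c'} (h : Hit S N k c c')
    (hl : c.2.length ≤ N) : c' = c := by
  cases h with
  | done => rfl
  | step => omega

theorem Hit.trans {S : CPS Q A Γ} {N M m k : ℕ} {c c1 c'} (hN : N ≤ M) (h : Hit S M m c c1)
    (h' : Hit S N k c1 c') : ∃ k', Hit S N k' c c' := by
  induction h with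
  | done => exact ⟨_, h'⟩
  | step γ op hl ht _ ih =>
    obtain ⟨k', hk⟩ := ih h'
    exact ⟨_, .step γ op (by omega) ht hk⟩

/-- Relocation of links from base width `b` to base width `b'`. -/
def shL (b b' : ℕ) : Letter A → Letter A
  | Sum.inl a => Sum.inl a
  | Sum.inr (a, k) => Sum.inr (a, if k = 0 then 0 else k - b + b')

def goodL (b : ℕ) : Letter A → Prop
  | Sum.inl _ => True
  | Sum.inr (_, k) => k = 0 ∨ b ≤ k

def zeroL : Letter A → Prop
  | Sum.inl _ => True
  | Sum.inr (_, k) => k = 0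

theorem symOf_shL (b b' : ℕ) (l : Letter A) : symOf (shL b b' l) = symOf l := by
  rcases l with a | ⟨a, k⟩ <;> rfl

theorem map_shL (b b' : ℕ) (v : Word A) (hv : ∀ l ∈ v, zeroL l) : v.map (shL b b') = v := by
  conv_rhs => rw [← List.map_id v]
  apply List.map_congr_left
  intro l hl
  have := hv l hl
  rcases l with a | ⟨a, k⟩
  · rfl
  · simp only [zeroL] at this; subst this; simp [shL]

theorem shift_step {S : CPS Q A Γ} {γ : Γ} {op : Op A} {q q' : Q} {B B' T s' : Stack2 A}
    (hB : B ≠ []) (hB' : B' ≠ []) (hT : T ≠ []) (hg : ∀ w ∈ T, ∀ l ∈ w, goodL B.length l)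
    (h : TransOp S γ op (q, B ++ T) (q', s')) :
    ∃ T', s' = B ++ T' ∧ (∀ w ∈ T', ∀ l ∈ w, goodL B.length l) ∧
      TransOp S γ op (q, B' ++ T.map (List.map (shL B.length B'.length)))
        (q', B' ++ T'.map (List.map (shL B.length B'.length))) := by
  have hb := List.length_pos_iff.2 hB
  have hb' := List.length_pos_iff.2 hB'
  obtain ⟨C, w0, l, hs, hd, hst⟩ := transOp_cases h
  rcases List.eq_nil_or_concat T with rfl | ⟨T0, w, rfl⟩
  · exact absurd rfl hT
  rw [List.concat_eq_append, ← List.append_assoc] at hs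
  obtain ⟨hC, hw⟩ := List.append_inj' hs rfl
  simp only [List.cons.injEq, and_true] at hw
  subst hw; subst hC
  have key : ∀ T', s' = B ++ T' → (∀ w ∈ T', ∀ l ∈ w, goodL B.length l) →
      St S.bot op (B' ++ T0.map (List.map (shL B.length B'.length)))
        (w0.map (shL B.length B'.length)) (shL B.length B'.length l)
        (B' ++ T'.map (List.map (shL B.length B'.length))) →
      ∃ T', s' = B ++ T' ∧ (∀ w ∈ T', ∀ l ∈ w, goodL B.length l) ∧
      TransOp S γ op (q, B' ++ (T0.concat (w0 ++ [l])).map (List.map (shL B.length B'.length)))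
        (q', B' ++ T'.map (List.map (shL B.length B'.length))) := by
    intro T' h1 h2 h3
    refine ⟨T', h1, h2, ?_⟩
    have := transOp_of (S := S) (γ := γ) (q := q) (q' := q') (by rw [symOf_shL]; exact hd) h3
    simpa [List.append_assoc] using this
  have hg0 : ∀ w ∈ T0, ∀ l ∈ w, goodL B.length l := fun w hw => hg w (by simp [hw])
  have hgw : ∀ l' ∈ w0 ++ [l], goodL B.length l' := hg _ (by simp)
  have hgw0 : ∀ l' ∈ w0, goodL B.length l' := fun l' hl => hgw l' (by simp [hl])
  cases hst with
  | clone =>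
    refine key (T0 ++ [w0 ++ [l]] ++ [w0 ++ [l]]) (by simp) ?_ ?_
    · intro w hw
      simp only [List.mem_append, List.mem_singleton] at hw
      rcases hw with (hw | rfl) | rfl
      · exact hg0 w hw
      · exact hgw
      · exact hgw
    · have := St.clone (bot := S.bot) (B' ++ T0.map (List.map (shL B.length B'.length)))
        (w0.map (shL B.length B'.length)) (shL B.length B'.length l)
      simpa [List.append_assoc] using this
  | push1 _ _ _ a ha =>
    refine key (T0 ++ [w0 ++ [l] ++ [Sum.inl a]]) (by simp) ?_ ?_
    · intro w hw
      simp only [List.mem_append, List.mem_singleton] at hw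
      rcases hw with hw | rfl
      · exact hg0 w hw
      · intro l' hl'
        rcases List.mem_append.1 hl' with h | h
        · exact hgw _ h
        · simp only [List.mem_singleton] at h; subst h; trivial
    · have := St.push1 (bot := S.bot) (B' ++ T0.map (List.map (shL B.length B'.length)))
        (w0.map (shL B.length B'.length)) (shL B.length B'.length l) a ha
      simpa [List.append_assoc, shL] using this
  | push2 _ _ _ a ha =>
    refine key (T0 ++ [w0 ++ [l] ++ [Sum.inr (a, (B ++ T0).length)]]) (by simp) ?_ ?_
    · intro w hw
      simp only [List.mem_append, List.mem_singleton] at hw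
      rcases hw with hw | rfl
      · exact hg0 w hw
      · intro l' hl'
        rcases List.mem_append.1 hl' with h | h
        · exact hgw _ h
        · simp only [List.mem_singleton] at h; subst h
          simp [goodL]
    · have := St.push2 (bot := S.bot) (B' ++ T0.map (List.map (shL B.length B'.length)))
        (w0.map (shL B.length B'.length)) (shL B.length B'.length l) a ha
      have e : (if B.length + T0.length = 0 then 0 else
        B.length + T0.length - B.length + B'.length) = T0.length + B'.length := by
        rw [if_neg (by omega)]; omega
      simpa [List.append_assoc, shL, e, hB, Nat.add_comm T0.length] using this
  | pop1 _ _ _ hw =>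
    refine key (T0 ++ [w0]) (by simp) ?_ ?_
    · intro w hw
      simp only [List.mem_append, List.mem_singleton] at hw
      rcases hw with hw | rfl
      · exact hg0 w hw
      · exact hgw0
    · have := St.pop1 (bot := S.bot) (B' ++ T0.map (List.map (shL B.length B'.length)))
        (w0.map (shL B.length B'.length)) (shL B.length B'.length l) (by simpa using hw)
      simpa [List.append_assoc] using this
  | pop2 _ _ _ hw =>
    refine key T0 rfl hg0 ?_
    exact .pop2 _ _ _ (by simp [hB'])
  | coll1 _ _ a hw =>
    refine key (T0 ++ [w0]) (by simp) ?_ ?_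
    · intro w hw
      simp only [List.mem_append, List.mem_singleton] at hw
      rcases hw with hw | rfl
      · exact hg0 w hw
      · exact hgw0
    · have := St.coll1 (bot := S.bot) (B' ++ T0.map (List.map (shL B.length B'.length)))
        (w0.map (shL B.length B'.length)) a (by simpa using hw)
      simpa [List.append_assoc, shL] using this
  | coll2 _ _ a k hk =>
    have hk' : B.length ≤ k := by
      have := hgw (Sum.inr (a, k)) (by simp)
      simp only [goodL] at this; omega
    refine key ((T0 ++ [w0 ++ [Sum.inr (a, k)]]).take (k - B.length)) ?_ ?_ ?_
    · rw [List.append_assoc, List.take_append, List.take_of_length_le hk']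
    · intro w hw
      exact hg w (by simpa using List.mem_of_mem_take hw)
    · have := St.coll2 (bot := S.bot) (B' ++ T0.map (List.map (shL B.length B'.length)))
        (w0.map (shL B.length B'.length)) a (k - B.length + B'.length) (by omega)
      rw [List.append_assoc, List.take_append, List.take_of_length_le (by omega),
        Nat.add_sub_cancel] at this
      have e : shL B.length B'.length (Sum.inr (a, k) : Letter A) =
          Sum.inr (a, k - B.length + B'.length) := by
        simp [shL, show k ≠ 0 by omega]
      rw [e]
      simpa [List.map_take, e] using this

theorem shift_hit {S : CPS Q A Γ} {N : ℕ} {B B' : Stack2 A}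
    (hB : B ≠ []) (hB' : B' ≠ []) (hN : N ≤ B.length) (k : ℕ) :
    ∀ (q : Q) (T : Stack2 A) (c' : Q × Stack2 A),
    (∀ w ∈ T, ∀ l ∈ w, goodL B.length l) →
    Hit S N k (q, B ++ T) c' →
    ∃ q2 m k', Hit S B'.length m (q, B' ++ T.map (List.map (shL B.length B'.length))) (q2, B') ∧
      k' ≤ k ∧ Hit S N k' (q2, B) c' := by
  induction k with
  | zero =>
    intro q T c' hg h
    cases h with
    | done _ hl =>
      have : T = [] := by
        simp only [List.length_append] at hl
        exact List.length_eq_zero_iff.1 (by omega)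
      subst this
      exact ⟨q, 0, 0, by simpa using Hit.done (S := S) (q, B') (le_refl _), le_refl _, by simpa using Hit.done (S := S) _ hl⟩
  | succ k ih =>
    intro q T c' hg h
    by_cases hT : T = []
    · subst hT
      exact ⟨q, 0, k + 1, by simpa using Hit.done (S := S) (q, B') (le_refl _), le_refl _, by simpa using h⟩
    cases h with
    | @step _ _ c1 _ γ op hl ht hr =>
      obtain ⟨q1, s1⟩ := c1
      obtain ⟨T', rfl, hg', ht'⟩ := shift_step hB hB' hT hg ht
      obtain ⟨q2, m, k', h1, h2, h3⟩ := ih q1 T' c' hg' hr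
      refine ⟨q2, m + 1, k', .step γ op ?_ ht' h1, by omega, h3⟩
      have := List.length_pos_iff.2 hT
      simp; omega

/-- States connected by a run that first drops below a topmost word `v`. -/
def R (S : CPS Q A Γ) (v : Word A) : Set (Q × Q) :=
  {p | ∃ k s', Hit S 1 k (p.1, [v, v]) (p.2, s')}

theorem good_of_zero {v : Word A} (hv : ∀ l ∈ v, zeroL l) (b : ℕ) :
    ∀ w ∈ [v], ∀ l ∈ w, goodL b l := by
  intro w hw l hl
  simp only [List.mem_singleton] at hw; subst hw
  have := hv l hl
  rcases l with a | ⟨a, k⟩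
  · trivial
  · exact Or.inl this

theorem R_lift {S : CPS Q A Γ} {v : Word A} (hv : ∀ l ∈ v, zeroL l) {q q' : Q}
    (h : (q, q') ∈ R S v) {B : Stack2 A} (hB : B ≠ []) :
    ∃ m, Hit S B.length m (q, B ++ [v]) (q', B) := by
  obtain ⟨k, s', h⟩ := h
  obtain ⟨q2, m, k', h1, _, h3⟩ := shift_hit (B := [v]) (B' := B) (T := [v]) (by simp) hB
    (le_refl _) k q _ (good_of_zero hv _) h
  have := h3.eq_of_le (by simp)
  simp only [Prod.mk.injEq] at this
  obtain ⟨rfl, rfl⟩ := this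
  simp only [List.map_cons, List.map_nil, map_shL _ _ v hv] at h1
  exact ⟨m, h1⟩

theorem main_step {S : CPS Q A Γ} {v v' : Word A} {a : Letter A}
    (hv : ∀ l ∈ v, zeroL l) (hv' : ∀ l ∈ v', zeroL l) (ha : zeroL a) (hne' : v' ≠ [])
    (hR : R S v ⊆ R S v') (x x' : Word A) (k : ℕ) :
    ∀ (q q' : Q) (Y : Stack2 A) (s' : Stack2 A),
      Hit S 1 k (q, [x] ++ Y.map (fun y => v ++ [a] ++ y)) (q', s') →
      ∃ k', Hit S 1 k' (q, [x'] ++ Y.map (fun y => v' ++ [a] ++ y)) (q', [x']) := by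
  induction k using Nat.strong_induction_on with
  | _ k ih =>
  intro q q' Y s' h
  rcases List.eq_nil_or_concat Y with rfl | ⟨Y, y, rfl⟩
  · have := h.eq_of_le (by simp)
    simp only [Prod.mk.injEq] at this
    obtain ⟨rfl, rfl⟩ := this
    exact ⟨0, by simpa using Hit.done (S := S) (q', [x']) (by simp)⟩
  cases h with
  | done _ hl => simp at hl
  | @step k _ c1 _ γ op hl ht hr =>
  obtain ⟨q1, s1⟩ := c1
  obtain ⟨C, w0, l, hs, hd, hst⟩ := transOp_cases ht
  simp only [List.concat_eq_append, List.map_append, List.map_cons, List.map_nil] at hs hl ⊢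
  rw [← List.append_assoc] at hs
  obtain ⟨hC, hw⟩ := List.append_inj' hs rfl
  simp only [List.cons.injEq, and_true] at hw
  subst hC
  -- generic continuation
  have cont : ∀ (w1 : Word A) (Y' : Stack2 A), v' ++ [a] ++ y = w1 ++ [l] →
      s1 = [x] ++ Y'.map (fun y => v ++ [a] ++ y) →
      St S.bot op ([x'] ++ Y.map (fun y => v' ++ [a] ++ y)) w1 l
        ([x'] ++ Y'.map (fun y => v' ++ [a] ++ y)) →
      ∃ k', Hit S 1 k' (q, [x'] ++ (Y.map (fun y => v' ++ [a] ++ y) ++ [v' ++ [a] ++ y]))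
        (q', [x']) := by
    intro w1 Y' hw1 h1 h2
    subst h1
    obtain ⟨k', hk⟩ := ih k (by omega) q1 q' Y' s' hr
    refine ⟨k' + 1, .step γ op (by simp) ?_ hk⟩
    have := transOp_of hd h2
    rw [hw1, ← List.append_assoc]
    exact this
  -- popping down to `v`
  have down : y = [] → w0 = v → l = a →
      s1 = [x] ++ Y.map (fun y => v ++ [a] ++ y) ++ [v] →
      St S.bot op ([x'] ++ Y.map (fun y => v' ++ [a] ++ y)) v' l
        ([x'] ++ Y.map (fun y => v' ++ [a] ++ y) ++ [v']) →
      ∃ k', Hit S 1 k' (q, [x'] ++ (Y.map (fun y => v' ++ [a] ++ y) ++ [v' ++ [a] ++ y]))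
        (q', [x']) := by
    rintro rfl rfl rfl h1 h2
    subst h1
    obtain ⟨q2, m, k', e1, e2, e3⟩ := shift_hit (B := [x] ++ Y.map (fun y => w0 ++ [l] ++ y))
      (B' := [w0]) (T := [w0]) (by simp) (by simp) (by simp) k q1 _ (good_of_zero hv _) hr
    simp only [List.map_cons, List.map_nil, map_shL _ _ w0 hv] at e1
    have hin : (q1, q2) ∈ R S v' := hR ⟨m, [w0], e1⟩
    obtain ⟨m', f1⟩ := R_lift hv' hin (B := [x'] ++ Y.map (fun y => v' ++ [l] ++ y)) (by simp)
    obtain ⟨k2, hk2⟩ := ih k' (by omega) q2 q' Y s' e3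
    obtain ⟨k3, hk3⟩ := Hit.trans (by simp) f1 hk2
    refine ⟨k3 + 1, .step γ op (by simp) ?_ hk3⟩
    have := transOp_of hd h2
    rw [List.append_nil, ← List.append_assoc]
    exact this
  -- shape of the top word
  have shape : (y = [] ∧ w0 = v ∧ l = a) ∨ ∃ y0, y = y0 ++ [l] ∧ w0 = v ++ [a] ++ y0 := by
    rcases List.eq_nil_or_concat y with rfl | ⟨y0, l', rfl⟩
    · left
      rw [List.append_nil] at hw
      obtain ⟨h1, h2⟩ := List.append_inj' hw rfl
      simp at h2
      exact ⟨rfl, h1.symm, h2.symm⟩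
    · right
      rw [List.concat_eq_append, ← List.append_assoc] at hw
      obtain ⟨h1, h2⟩ := List.append_inj' hw rfl
      simp at h2
      exact ⟨y0, by simp [h2], h1.symm⟩
  obtain ⟨w1, hw1, hw1c⟩ : ∃ w1, v' ++ [a] ++ y = w1 ++ [l] ∧ w1 ≠ [] := by
    rcases shape with ⟨rfl, rfl, rfl⟩ | ⟨y0, rfl, _⟩
    · exact ⟨v', by simp, hne'⟩
    · exact ⟨v' ++ [a] ++ y0, by simp, by simp⟩
  cases hst with
  | clone =>
    refine cont w1 (Y ++ [y] ++ [y]) hw1 (by simp [← hw]) ?_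
    have := St.clone (bot := S.bot) ([x'] ++ Y.map (fun y => v' ++ [a] ++ y)) w1 l
    rw [← hw1] at this
    simpa using this
  | push1 _ _ _ b hb =>
    refine cont w1 (Y ++ [y ++ [Sum.inl b]]) hw1 (by simp [← hw]) ?_
    have := St.push1 (bot := S.bot) ([x'] ++ Y.map (fun y => v' ++ [a] ++ y)) w1 l b hb
    rw [← hw1] at this
    simpa using this
  | push2 _ _ _ b hb =>
    refine cont w1 (Y ++ [y ++ [Sum.inr (b, Y.length + 1)]]) hw1 (by simp [← hw]) ?_
    have := St.push2 (bot := S.bot) ([x'] ++ Y.map (fun y => v' ++ [a] ++ y)) w1 l b hb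
    rw [← hw1] at this
    simpa using this
  | pop1 _ _ _ hw0 =>
    rcases shape with ⟨h1, h2, h3⟩ | ⟨y0, rfl, rfl⟩
    · exact down h1 h2 h3 (by rw [h2]) (.pop1 _ _ _ hne')
    · refine cont (v' ++ [a] ++ y0) (Y ++ [y0]) (by simp) (by simp) ?_
      have := St.pop1 (bot := S.bot) ([x'] ++ Y.map (fun y => v' ++ [a] ++ y))
        (v' ++ [a] ++ y0) l (by simp)
      simpa using this
  | pop2 _ _ _ hw0 =>
    exact cont w1 Y hw1 rfl (.pop2 _ _ _ (by simp))
  | coll1 _ _ b hw0 =>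
    rcases shape with ⟨h1, h2, h3⟩ | ⟨y0, rfl, rfl⟩
    · exact down h1 h2 h3 (by rw [h2]) (.coll1 _ _ _ hne')
    · refine cont (v' ++ [a] ++ y0) (Y ++ [y0]) (by simp) (by simp) ?_
      have := St.coll1 (bot := S.bot) ([x'] ++ Y.map (fun y => v' ++ [a] ++ y))
        (v' ++ [a] ++ y0) b (by simp)
      simpa using this
  | coll2 _ _ b j hj =>
    obtain ⟨j, rfl⟩ := Nat.exists_eq_succ_of_ne_zero (by omega : j ≠ 0)
    refine cont w1 ((Y ++ [y]).take j) hw1 ?_ ?_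
    · rw [← hw]; simp [List.map_take]
    · have := St.coll2 (bot := S.bot) ([x'] ++ Y.map (fun y => v' ++ [a] ++ y)) w1 b (j + 1) hj
      rw [← hw1] at this
      simpa [List.map_take] using this

theorem R_succ {S : CPS Q A Γ} {v v' : Word A} {a : Letter A}
    (hv : ∀ l ∈ v, zeroL l) (hv' : ∀ l ∈ v', zeroL l) (ha : zeroL a) (hne' : v' ≠ [])
    (hR : R S v ⊆ R S v') : R S (v ++ [a]) ⊆ R S (v' ++ [a]) := by
  rintro ⟨q, q'⟩ ⟨k, s', h⟩
  obtain ⟨k', h'⟩ := main_step hv hv' ha hne' hR (v ++ [a]) (v' ++ [a]) k q q' [[]] s'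
    (by simpa using h)
  exact ⟨k', _, by simpa using h'⟩



theorem run_hit {S : CPS Q A Γ} (ρ : Run S) (N n : ℕ) :
    ∀ i, i + n ≤ ρ.len → (ρ.stk (i + n)).length ≤ N →
      ∃ m ≤ n, Hit S N m (ρ.cfg i) (ρ.cfg (i + m)) := by
  induction n with
  | zero =>
    intro i hi h
    exact ⟨0, le_refl _, .done _ h⟩
  | succ n ih =>
    intro i hi h
    by_cases hl : (ρ.stk i).length ≤ N
    · exact ⟨0, by omega, .done _ hl⟩
    · have e : i + 1 + n = i + (n + 1) := by omega
      obtain ⟨m, hm, hh⟩ := ih (i + 1) (by omega) (by rw [e]; exact h)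
      refine ⟨m + 1, by omega, ?_⟩
      have e' : i + 1 + m = i + (m + 1) := by omega
      rw [e'] at hh
      exact .step _ _ (by simpa [Run.stk] using hl) (ρ.ok i (by omega)) hh

theorem hit_run {S : CPS Q A Γ} {N k : ℕ} {c c'} (γ0 : Γ) (h : Hit S N k c c') :
    ∃ ρ : Run S, ρ.len = k ∧ ρ.cfg 0 = c ∧ ρ.cfg k = c' ∧
      ∀ i, i < k → N < (ρ.stk i).length := by
  induction h with
  | done c hl =>
    exact ⟨⟨0, fun _ => c, fun _ => γ0, fun _ => .pop1, by intro i hi; omega⟩, rfl, rfl, rfl,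
      by intro i hi; omega⟩
  | @step k c c1 c' γ op hl ht _ ih =>
    obtain ⟨ρ, h1, h2, h3, h4⟩ := ih
    refine ⟨⟨k + 1, fun i => Nat.casesOn i c ρ.cfg, fun i => Nat.casesOn i γ ρ.lab,
      fun i => Nat.casesOn i op ρ.op, ?_⟩, rfl, rfl, h3, ?_⟩
    · intro i hi
      cases i with
      | zero => simpa [h2] using ht
      | succ i => exact ρ.ok i (by omega)
    · intro i hi
      cases i with
      | zero => exact hl
      | succ i => exact h4 i (by omega)

theorem iter_pop1_length {A : Type} (n : ℕ) : ∀ (s t : Stack2 A), iter pop1 n s = some t →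
    t.length = s.length := by
  induction n with
  | zero => intro s t h; simp [iter] at h; rw [h]
  | succ n ih =>
    intro s t h
    simp only [iter] at h
    rcases List.eq_nil_or_concat s with rfl | ⟨B, w, rfl⟩
    · simp [pop1] at h
    · simp only [pop1, List.concat_eq_append, List.getLast?_append, List.getLast?_singleton,
        Option.some_or] at h
      split at h
      · have := ih _ _ h
        simpa using this
      · simp at h

theorem substack_length {A : Type} {x : Word A} {t : Stack2 A} (h : Substack t [x]) :
    t.length = 1 := by
  obtain ⟨n, m, h⟩ := h
  cases m with
  | zero => simpa using iter_pop1_length n _ _ h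
  | succ m => simp [iter, pop2] at h

/-- A letter without link `1`. -/
def no1 : Letter A → Prop
  | Sum.inl _ => True
  | Sum.inr (_, k) => k ≠ 1

/-- The invariant of runs that do not pop below `u` at width 2. -/
def Inv (x u : Word A) (s : Stack2 A) : Prop :=
  ∃ w2 T, s = [x, w2] ++ T ∧ u <+: w2 ∧ ∀ w ∈ T, u <+: w ∨ ∀ l ∈ w, no1 l

theorem inv_step {S : CPS Q A Γ} {γ : Γ} {op : Op A} {q q' : Q} {x u : Word A}
    {s s' : Stack2 A} (hu : ∀ l ∈ u, zeroL l) (h : TransOp S γ op (q, s) (q', s'))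
    (hi : Inv x u s) (hl : 1 < s'.length)
    (hp : 1 < u.length → s' ≠ [x, u.dropLast]) : Inv x u s' := by
  obtain ⟨w2, T, rfl, h2, hT⟩ := hi
  have hpre : ∀ (w0 : Word A) (l : Letter A), u <+: w0 ++ [l] → u = w0 ++ [l] ∨ u <+: w0 :=
    fun w0 l => List.prefix_concat_iff.1
  obtain ⟨C, w0, l, hs, hd, hst⟩ := transOp_cases h
  rcases List.eq_nil_or_concat T with rfl | ⟨T0, w, rfl⟩
  · have : C = [x] ∧ w2 = w0 ++ [l] := by
      have hs' : [x] ++ [w2] = C ++ [w0 ++ [l]] := by simpa using hs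
      obtain ⟨a, b⟩ := List.append_inj' hs' rfl
      simp at b
      exact ⟨a.symm, b⟩
    obtain ⟨rfl, rfl⟩ := this
    have pop : w0 ≠ [] → s' = [x] ++ [w0] → Inv x u s' := by
      intro hw e
      rcases hpre _ _ h2 with rfl | h3
      · exact absurd (by simpa using e) (hp (by simp [List.length_pos_iff, hw]))
      · exact ⟨w0, [], by simpa using e, h3, by simp⟩
    cases hst with
    | clone => exact ⟨w0 ++ [l], [w0 ++ [l]], by simp, h2, by simp [h2]⟩
    | push1 _ _ _ a ha => exact ⟨w0 ++ [l] ++ [Sum.inl a], [], by simp,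
        h2.trans (List.prefix_append _ _), by simp⟩
    | push2 _ _ _ a ha => exact ⟨w0 ++ [l] ++ [Sum.inr (a, 1)], [], by simp,
        h2.trans (List.prefix_append _ _), by simp⟩
    | pop1 _ _ _ hw => exact pop hw rfl
    | pop2 _ _ _ hw => simp at hl
    | coll1 _ _ a hw => exact pop hw rfl
    | coll2 _ _ a k hk =>
      refine ⟨w0 ++ [Sum.inr (a, k)], [], ?_, h2, by simp⟩
      rw [List.take_of_length_le]
      · simp
      · simp at hl ⊢; omega
  · rw [List.concat_eq_append, ← List.append_assoc] at hs
    obtain ⟨hC, hw⟩ := List.append_inj' hs rfl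
    simp only [List.cons.injEq, and_true] at hw
    subst hw; subst hC
    have hT0 : ∀ w ∈ T0, u <+: w ∨ ∀ l ∈ w, no1 l := fun w hw => hT w (by simp [hw])
    have hTw := hT (w0 ++ [l]) (by simp)
    have key : ∀ w', s' = [x, w2] ++ T0 ++ [w'] → (u <+: w' ∨ ∀ l ∈ w', no1 l) →
        Inv x u s' := by
      intro w' e hw'
      refine ⟨w2, T0 ++ [w'], by simp [e], h2, ?_⟩
      intro w hw
      simp only [List.mem_append, List.mem_singleton] at hw
      rcases hw with hw | rfl
      · exact hT0 w hw
      · exact hw'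
    have pop : s' = [x, w2] ++ T0 ++ [w0] → Inv x u s' := by
      intro e
      refine key w0 e ?_
      rcases hTw with h3 | h3
      · rcases hpre _ _ h3 with rfl | h4
        · right
          intro l' hl'
          have := hu l' (by simp [hl'])
          rcases l' with a | ⟨a, k⟩
          · trivial
          · simp only [zeroL] at this; simp [no1, this]
        · exact Or.inl h4
      · exact Or.inr fun l' hl' => h3 l' (by simp [hl'])
    have push : ∀ l', no1 l' → s' = [x, w2] ++ T0 ++ [w0 ++ [l] ++ [l']] → Inv x u s' := by
      intro l' hl' e
      refine key _ e ?_
      rcases hTw with h3 | h3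
      · exact Or.inl (h3.trans (List.prefix_append _ _))
      · right
        intro l'' h
        rcases List.mem_append.1 h with h | h
        · exact h3 _ h
        · simp only [List.mem_singleton] at h; subst h; exact hl'
    cases hst with
    | clone =>
      refine ⟨w2, T0 ++ [w0 ++ [l]] ++ [w0 ++ [l]], by simp, h2, ?_⟩
      intro w hw
      apply hT
      simp at hw ⊢
      tauto
    | push1 _ _ _ a ha => exact push (Sum.inl a) trivial rfl
    | push2 _ _ _ a ha => exact push _ (by simp [no1]) rfl
    | pop1 _ _ _ hw => exact pop rfl
    | pop2 _ _ _ hw => exact ⟨w2, T0, rfl, h2, hT0⟩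
    | coll1 _ _ a hw => exact pop rfl
    | coll2 _ _ a k hk =>
      have hk2 : 2 ≤ k := by simp at hl; omega
      obtain ⟨k, rfl⟩ := Nat.exists_eq_add_of_le' hk2
      refine ⟨w2, (T0 ++ [w0 ++ [Sum.inr (a, k + 2)]]).take k, by simp, h2, ?_⟩
      intro w hw
      exact hT w (by simpa using List.mem_of_mem_take hw)

theorem shell_ret {S : CPS Q A Γ} (ρ : Run S) (x : Word A) (j : ℕ) (hj : j ≤ ρ.len)
    (hxj : ρ.stk j = [x]) (n : ℕ) :
    ∀ (u : Word A) (i : ℕ), u.length = n → (∀ l ∈ u, zeroL l) → i < j → ρ.stk i = [x, u] →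
      (∀ k, i ≤ k → k < j → 1 < (ρ.stk k).length) → RetSeg ρ i j := by
  induction n with
  | zero =>
    intro u i hn hu hij hi hw
    have : u = [] := List.length_eq_zero_iff.1 hn
    subst this
    obtain ⟨C, w0, l, hs, -⟩ := transOp_cases (q := (ρ.cfg i).1) (s := ρ.stk i) (ρ.ok i (by omega))
    rw [hi] at hs
    have hs' : [x] ++ [[]] = C ++ [w0 ++ [l]] := by simpa using hs
    have := (List.append_inj' hs' rfl).2
    simp at this
  | succ n ih =>
    intro u i hn hu hij hi hw
    have shell : RetShell ρ i j := by
      refine ⟨hij, hj, by simp [hi, hxj, pop2], ?_⟩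
      intro k h1 h2 h3
      rw [hxj] at h3
      have := substack_length h3
      have := hw k h1 h2
      omega
    by_cases hex : 1 < u.length ∧ ∃ k, i < k ∧ k < j ∧ ρ.stk k = [x, u.dropLast]
    · obtain ⟨h1, k, hk1, hk2, hk3⟩ := hex
      refine .sub shell hk1 hk2.le ?_ (ih u.dropLast k (by simp [hn]) ?_ hk2 hk3 ?_)
      · simp [pop1, hi, hk3, h1]
      · exact fun l hl => hu l (List.mem_of_mem_dropLast hl)
      · exact fun k' h1 h2 => hw k' (by omega) h2
    · have inv : ∀ d, i + d < j → Inv x u (ρ.stk (i + d)) := by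
        intro d
        induction d with
        | zero => intro _; exact ⟨u, [], by simpa using hi, List.prefix_rfl, by simp⟩
        | succ d ihd =>
          intro hd
          refine inv_step (q := (ρ.cfg (i + d)).1) (q' := (ρ.cfg (i + d + 1)).1)
            hu (ρ.ok (i + d) (by omega)) (ihd (by omega)) (hw (i + d + 1) (by omega) hd) ?_
          intro h1 h2
          exact hex ⟨h1, i + d + 1, by omega, hd, h2⟩
      have hinv : Inv x u (ρ.stk (j - 1)) := by
        have := inv (j - 1 - i) (by omega)
        rwa [show i + (j - 1 - i) = j - 1 by omega] at this
      have hlen := hw (j - 1) (by omega) (by omega)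
      have ht := ρ.ok (j - 1) (by omega)
      rw [show j - 1 + 1 = j by omega] at ht
      obtain ⟨C, w0, l, hs, hd, hst⟩ := transOp_cases (q := (ρ.cfg (j - 1)).1)
        (s := ρ.stk (j - 1)) (q' := (ρ.cfg j).1) (s' := ρ.stk j) ht
      rw [hxj] at hst
      have hC : C ≠ [] := by
        rintro rfl
        rw [hs] at hlen; simp at hlen
      have hC' := List.length_pos_iff.2 hC
      generalize hop : ρ.op (j - 1) = op at hst
      generalize he : [x] = s' at hst
      have hel : s'.length = 1 := by simp [← he]
      cases hst with
      | clone => simp at hel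
      | push1 => simp [hC] at hel
      | push2 => simp [hC] at hel
      | pop1 => simp [hC] at hel
      | coll1 => simp [hC] at hel
      | pop2 => exact .pop2 shell hop
      | coll2 _ _ a k hk =>
        have hk1 : k = 1 := by simp at hel; omega
        subst hk1
        refine .collapse shell hop ⟨u, w0 ++ [Sum.inr (a, 1)], by simp [top2, hi],
          by simp [top2, hs], ?_, ?_⟩
        · obtain ⟨w2, T, e, h2, hT⟩ := hinv
          rcases List.eq_nil_or_concat T with rfl | ⟨T0, w, rfl⟩
          · have hs' : [x] ++ [w2] = C ++ [w0 ++ [Sum.inr (a, 1)]] := by simpa [hs] using e.symm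
            have := (List.append_inj' hs' rfl).2
            simp at this
            exact this ▸ h2
          · rw [List.concat_eq_append, ← List.append_assoc, hs] at e
            have := (List.append_inj' e rfl).2
            simp only [List.cons.injEq, and_true] at this
            subst this
            rcases hT (w0 ++ [Sum.inr (a, 1)]) (by simp) with h | h
            · exact h
            · exact absurd rfl (h (Sum.inr (a, 1)) (by simp))
        · rintro rfl
          have := hu (Sum.inr (a, 1)) (by simp)
          simp [zeroL] at this

theorem down0_zero (w : Word A) : ∀ l ∈ down0 w, zeroL l := by
  intro l hl
  simp only [down0, List.mem_map] at hl
  obtain ⟨a, _, rfl⟩ := hl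
  rcases a with a | ⟨a, k⟩
  · trivial
  · rfl

theorem retSeg_shell {S : CPS Q A Γ} {ρ : Run S} {i j : ℕ} (h : RetSeg ρ i j) :
    RetShell ρ i j := by
  cases h <;> assumption

theorem exRet_eq (S : CPS Q A Γ) (w : Word A) : ExRet S w = R S (down0 w) := by
  have hv := down0_zero w
  generalize hve : down0 w = v at hv
  ext ⟨q, q'⟩
  constructor
  · rintro ⟨ρ, h0, h1, hr⟩
    rw [hve] at h0 h1
    simp only at h0 h1
    obtain ⟨hlt, _, _, hsub⟩ := retSeg_shell hr
    obtain ⟨m, hm, hh⟩ := run_hit ρ 1 ρ.len 0 (by omega) (by simp [Run.stk, h1])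
    rw [h0, Nat.zero_add] at hh
    obtain ⟨q2, m', k', -, -, h3⟩ := shift_hit (B := [v]) (B' := [v]) (T := [v]) (by simp)
      (by simp) (le_refl _) m q _ (good_of_zero hv _) hh
    have e := h3.eq_of_le (by simp)
    rcases hm.lt_or_eq with hlt' | rfl
    · exact absurd ⟨0, 0, by simp [iter, Run.stk, e, h1]⟩ (hsub m (by omega) hlt')
    · rw [h1] at hh
      exact ⟨_, _, hh⟩
  · intro hR
    obtain ⟨k, hh⟩ := R_lift hv hR (B := [v]) (by simp)
    obtain ⟨γ0⟩ : Nonempty Γ := by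
      cases hh with
      | step γ => exact ⟨γ⟩
    obtain ⟨ρ, rfl, h0, h1, hw⟩ := hit_run γ0 hh
    refine ⟨ρ, by rw [hve]; simpa using h0, by rw [hve]; exact h1, ?_⟩
    have hpos : 0 < ρ.len := by
      rcases Nat.eq_zero_or_pos ρ.len with h | h
      · rw [h, h0] at h1; simp at h1
      · exact h
    exact shell_ret ρ v ρ.len (le_refl _) (by simp [Run.stk, h1]) v.length v 0 rfl hv hpos
      (by simp [Run.stk, h0]) (fun k _ h => by simpa using hw k h)

/-- The words occurring in stacks: a bottom symbol followed by other symbols. -/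
def Valid (bot : A) (w : Word A) : Prop :=
  ∃ r, w = Sum.inl bot :: r ∧ ∀ l ∈ r, symOf l ≠ bot

theorem valid_pop {bot : A} {w0 : Word A} {l : Letter A} (h : Valid bot (w0 ++ [l]))
    (hw : w0 ≠ []) : Valid bot w0 := by
  obtain ⟨r, h1, h2⟩ := h
  cases w0 with
  | nil => exact absurd rfl hw
  | cons a w0 =>
    simp only [List.cons_append, List.cons.injEq] at h1
    obtain ⟨rfl, rfl⟩ := h1
    exact ⟨w0, rfl, fun l' hl' => h2 l' (by simp [hl'])⟩

theorem valid_push {bot : A} {w : Word A} {l : Letter A} (h : Valid bot w)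
    (hl : symOf l ≠ bot) : Valid bot (w ++ [l]) := by
  obtain ⟨r, rfl, h2⟩ := h
  refine ⟨r ++ [l], by simp, ?_⟩
  intro l' h
  rcases List.mem_append.1 h with h | h
  · exact h2 _ h
  · simp only [List.mem_singleton] at h; subst h; exact hl

theorem isStack_valid {bot : A} {s : Stack2 A} (h : IsStack bot s) :
    s ≠ [] ∧ ∀ w ∈ s, Valid bot w := by
  induction h with
  | base =>
    refine ⟨by simp [bottom2], ?_⟩
    intro w hw
    simp only [bottom2, List.mem_singleton] at hw
    subst hw
    exact ⟨[], rfl, by simp⟩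
  | @step s t op _ hop ih =>
    obtain ⟨hne, hval⟩ := ih
    rcases List.eq_nil_or_concat s with rfl | ⟨B, w, rfl⟩
    · exact absurd rfl hne
    have hvw := hval w (by simp)
    have hvB : ∀ w ∈ B, Valid bot w := fun w hw => hval w (by simp [hw])
    rcases List.eq_nil_or_concat w with rfl | ⟨w0, l, rfl⟩
    · obtain ⟨r, h1, _⟩ := hvw
      simp at h1
    simp only [List.concat_eq_append] at hop hvw hval
    have key : ∀ w', Valid bot w' → B ++ [w'] ≠ [] ∧ ∀ w ∈ B ++ [w'], Valid bot w := by
      intro w' hw'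
      refine ⟨by simp, ?_⟩
      intro w hw
      simp only [List.mem_append, List.mem_singleton] at hw
      rcases hw with hw | rfl
      · exact hvB w hw
      · exact hw'
    cases (applyOp_iff _ _ _ _ _ _).1 hop with
    | clone =>
      refine ⟨by simp, ?_⟩
      intro w hw
      apply hval
      simp at hw ⊢
      tauto
    | push1 _ _ _ a ha => exact key _ (valid_push hvw ha)
    | push2 _ _ _ a ha => exact key _ (valid_push hvw ha)
    | pop1 _ _ _ hw => exact key _ (valid_pop hvw hw)
    | pop2 _ _ _ hw => exact ⟨hw, hvB⟩
    | coll1 _ _ a hw => exact key _ (valid_pop hvw hw)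
    | coll2 _ _ a k hk =>
      refine ⟨?_, fun w hw => hval w (List.mem_of_mem_take hw)⟩
      intro h
      simp at h
      omega

open Classical in
/-- Transition function of the Moore machine. -/
noncomputable def mstep (S : CPS Q A Γ) (X : Set (Q × Q)) (a : Letter A) : Set (Q × Q) :=
  if symOf a = S.bot then R S [Sum.inl S.bot]
  else if h : ∃ v : Word A, v ≠ [] ∧ (∀ l ∈ v, zeroL l) ∧ R S v = X then R S (h.choose ++ [a])
  else X

theorem mstep_eq (S : CPS Q A Γ) {v : Word A} {a : Letter A} (hne : v ≠ [])
    (hv : ∀ l ∈ v, zeroL l) (ha : zeroL a) (hb : symOf a ≠ S.bot) :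
    mstep S (R S v) a = R S (v ++ [a]) := by
  have h : ∃ v' : Word A, v' ≠ [] ∧ (∀ l ∈ v', zeroL l) ∧ R S v' = R S v := ⟨v, hne, hv, rfl⟩
  rw [mstep, if_neg hb, dif_pos h]
  obtain ⟨h1, h2, h3⟩ := h.choose_spec
  exact Set.Subset.antisymm (R_succ h2 hv ha hne h3.subset) (R_succ hv h2 ha h1 h3.symm.subset)

theorem foldl_mstep (S : CPS Q A Γ) (r : Word A) :
    (∀ l ∈ r, symOf l ≠ S.bot) → (∀ l ∈ r, zeroL l) →
    (Sum.inl S.bot :: r).foldl (mstep S) ∅ = R S (Sum.inl S.bot :: r) := by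
  induction r using List.reverseRecOn with
  | nil => intro _ _; simp [mstep, symOf]
  | append_singleton r a ih =>
    intro h1 h2
    have ih' := ih (fun l hl => h1 l (by simp [hl])) (fun l hl => h2 l (by simp [hl]))
    rw [← List.cons_append, List.foldl_append, ih']
    refine mstep_eq S (by simp) ?_ (h2 a (by simp)) (h1 a (by simp))
    intro l hl
    rcases List.mem_cons.1 hl with rfl | hl
    · trivial
    · exact h2 l (by simp [hl])

/-- There is a deterministic finite automaton with output with at
most `2^(|Q|²)` states computing `ExRet(w)` on input `w↓₀`, for every word `w`
occurring as the topmost word of some stack. -/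
theorem exRet_computable_by_moore
    {Q A Γ : Type} [Fintype Q] [DecidableEq A] (S : CPS Q A Γ) :
    ∃ M : Moore (Letter A) (Set (Q × Q)),
      Nat.card M.St ≤ 2 ^ (Fintype.card Q * Fintype.card Q) ∧
      ∀ (s : Stack2 A) (w : Word A), IsStack S.bot s → top2 s = some w →
        M.output (down0 w) = ExRet S w := by
  classical
  refine ⟨⟨Set (Q × Q), inferInstance, ∅, mstep S, id⟩, ?_, ?_⟩
  · simp [Nat.card_eq_fintype_card, Fintype.card_set]
  · intro s w hs hw
    obtain ⟨r, rfl, hr⟩ := (isStack_valid hs).2 w (List.mem_of_getLast? hw)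
    rw [exRet_eq]
    have h := foldl_mstep S (down0 r) ?_ (down0_zero r)
    · exact h
    · intro l hl
      simp only [down0, List.mem_map] at hl
      obtain ⟨a, ha, rfl⟩ := hl
      have := hr a ha
      rcases a with a | ⟨a, k⟩ <;> exact this


end CPG
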